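/- Let A and B be finite multisets of elements of a commutative ring, and let A**B denote the bag product, i.e., the multiset of all products a·b with a ∈ A and b ∈ B (counted with multiplicity). Then ν(A**B) = (∑_{a∈A} a)²·(∑_{b∈B} b)² − (∑_{a∈A} a³)·(∑_{b∈B} b³). In particular, if ν(A) = 0 and ν(B) = 0 then ν(A**B) = 0. -/

import Mathlib

/-!
Each power sum is multiplicative on bag products, because `(a * b) ^ k = a ^ k * b ^ k` and the
double sum over `A` and `B` factors. The formula for `nu` is the cases `k = 1` and `k = 3`; when
`nu` vanishes on `A` and `B`, the squared sums equal the sums of cubes and the two terms cancel.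
-/

/-- ν of a finite multiset in a commutative ring. -/
def nu {R : Type*} [CommRing R] (σ : Multiset R) : R :=
  σ.sum ^ 2 - (σ.map (fun x => x ^ 3)).sum

/-- Bag product of two finite multisets: all products a·b with a ∈ A, b ∈ B. -/
def bagProd {R : Type*} [CommRing R] (A B : Multiset R) : Multiset R :=
  A.bind (fun a => B.map (fun b => a * b))

theorem sum_map_pow_bagProd {R : Type*} [CommRing R] (A B : Multiset R) (k : ℕ) :
    ((bagProd A B).map (fun x => x ^ k)).sum
      = (A.map (fun x => x ^ k)).sum * (B.map (fun x => x ^ k)).sum := by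
  simp [bagProd, Multiset.map_bind, Multiset.sum_bind, mul_pow, Multiset.sum_map_mul_left,
    Multiset.sum_map_mul_right]

/-- ν of a bag product, and closure of the ν = 0 property under bag products. -/
theorem stmt_7 {R : Type*} [CommRing R] (A B : Multiset R) :
    (nu (bagProd A B)
      = A.sum ^ 2 * B.sum ^ 2 - (A.map (fun x => x ^ 3)).sum * (B.map (fun x => x ^ 3)).sum) ∧
    (nu A = 0 → nu B = 0 → nu (bagProd A B) = 0) := by
  have h1 : (bagProd A B).sum = A.sum * B.sum := by
    simpa using sum_map_pow_bagProd A B 1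
  have key : nu (bagProd A B)
      = A.sum ^ 2 * B.sum ^ 2
        - (A.map (fun x => x ^ 3)).sum * (B.map (fun x => x ^ 3)).sum := by
    rw [nu, h1, sum_map_pow_bagProd, mul_pow]
  refine ⟨key, fun hA hB => ?_⟩
  rw [key, sub_eq_zero.mp hA, sub_eq_zero.mp hB, sub_self]
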